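/- arXiv:1408.2245 — 3 statements merged into one kernel-verified Lean document; each statement's English description precedes it below -/
import Mathlib

section
/- For all x > -1/2, one has ψ'(x + 1/2) > 20x(84x² + 71)/(1680x⁴ + 1560x² + 81). -/
open Real Filter Set

/-- The digamma function ψ(x) = Γ'(x)/Γ(x), as the derivative of log ∘ Γ. -/
noncomputable def digamma (x : ℝ) : ℝ := deriv (fun y : ℝ => Real.log (Real.Gamma y)) x

/-- L(x,a) = (1/(90a²+2))·ln(x²+x+(3a+1)/3) + (45a²/(90a²+2))·ln(x²+x+(15a−1)/(45a)). -/
noncomputable def L (x a : ℝ) : ℝ :=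
  (1 / (90 * a ^ 2 + 2)) * Real.log (x ^ 2 + x + (3 * a + 1) / 3) +
    (45 * a ^ 2 / (90 * a ^ 2 + 2)) * Real.log (x ^ 2 + x + (15 * a - 1) / (45 * a))

lemma aux_contDiffAt {t : ℝ} (ht : 0 < t) :
    ContDiffAt ℝ 2 (fun y : ℝ => Real.log (Real.Gamma y)) t := by
  have h1 : ContDiffAt ℂ 2 Complex.Gamma (t : ℂ) := by
    have hd : DifferentiableOn ℂ Complex.Gamma {z : ℂ | 0 < z.re} := by
      intro z hz
      refine (Complex.differentiableAt_Gamma z ?_).differentiableWithinAt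
      rintro m rfl
      simp at hz
      have : (0 : ℝ) ≤ m := Nat.cast_nonneg m
      linarith
    have ho : IsOpen {z : ℂ | 0 < z.re} := isOpen_lt continuous_const Complex.continuous_re
    exact ((hd.analyticAt (ho.mem_nhds (by simpa using ht))).contDiffAt)
  have h2 : ContDiffAt ℝ 2 Real.Gamma t := by
    have := h1.real_of_complex
    refine this.congr_of_eventuallyEq (Eventually.of_forall fun y => ?_)
    simp [Complex.Gamma_ofReal]
  exact h2.log (Real.Gamma_pos_of_pos ht).ne'

lemma aux_diff {t : ℝ} (ht : 0 < t) : DifferentiableAt ℝ digamma t := by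
  have h := aux_contDiffAt ht
  have h' : ContDiffAt ℝ 1 (deriv (fun y : ℝ => Real.log (Real.Gamma y))) t := by
    have := (h.fderiv_right (m := 1) (by norm_num)).clm_apply
      (contDiffAt_const (c := (1 : ℝ)))
    simpa only [fderiv_apply_one_eq_deriv] using this
  exact h'.differentiableAt (by norm_num)

lemma aux_rec {t : ℝ} (ht : 0 < t) : digamma (t + 1) = digamma t + t⁻¹ := by
  unfold digamma
  rw [← deriv_comp_add_const]
  have : (fun y : ℝ => Real.log (Real.Gamma (y + 1))) =ᶠ[nhds t]
      (fun y => Real.log (Real.Gamma y) + Real.log y) := by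
    filter_upwards [lt_mem_nhds ht] with y hy
    rw [Real.Gamma_add_one hy.ne', Real.log_mul hy.ne' (Real.Gamma_pos_of_pos hy).ne', add_comm]
  rw [this.deriv_eq, deriv_fun_add ((aux_contDiffAt ht).differentiableAt (by norm_num))
    (Real.differentiableAt_log ht.ne'), Real.deriv_log]

lemma aux_rec' {t : ℝ} (ht : 0 < t) :
    deriv digamma (t + 1) = deriv digamma t - 1 / t ^ 2 := by
  rw [← deriv_comp_add_const]
  have : (fun y : ℝ => digamma (y + 1)) =ᶠ[nhds t] (fun y => digamma y + y⁻¹) := by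
    filter_upwards [lt_mem_nhds ht] with y hy
    exact aux_rec hy
  rw [this.deriv_eq, deriv_fun_add (aux_diff ht) (differentiableAt_inv ht.ne'), deriv_inv]
  simp [sub_eq_add_neg]

lemma aux_nonneg {t : ℝ} (ht : 0 < t) : 0 ≤ deriv digamma t := by
  have hm : MonotoneOn digamma (Ioi 0) :=
    Real.convexOn_log_Gamma.monotoneOn_deriv
      (fun x hx => (aux_contDiffAt hx).differentiableAt (by norm_num))
  have := hm.derivWithin_nonneg (x := t)
  rwa [derivWithin_of_isOpen isOpen_Ioi ht] at this

noncomputable def auxR (t : ℝ) : ℝ :=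
  20 * (t - 1 / 2) * (84 * (t - 1 / 2) ^ 2 + 71) /
    (1680 * (t - 1 / 2) ^ 4 + 1560 * (t - 1 / 2) ^ 2 + 81)

lemma aux_R {t : ℝ} (ht : 0 < t) : auxR t - auxR (t + 1) < 1 / t ^ 2 := by
  unfold auxR
  have h1 : 0 < 1680 * (t - 1 / 2) ^ 4 + 1560 * (t - 1 / 2) ^ 2 + 81 := by positivity
  have h2 : 0 < 1680 * (t + 1 - 1 / 2) ^ 4 + 1560 * (t + 1 - 1 / 2) ^ 2 + 81 := by positivity
  rw [div_sub_div _ _ h1.ne' h2.ne', div_lt_div_iff₀ (mul_pos h1 h2) (by positivity)]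
  rw [← sub_pos]
  ring_nf
  positivity

lemma aux_bound {t : ℝ} (ht : 1 ≤ t) : auxR t ≤ 3 / t := by
  unfold auxR
  have h1 : 0 < 1680 * (t - 1 / 2) ^ 4 + 1560 * (t - 1 / 2) ^ 2 + 81 := by positivity
  rw [div_le_div_iff₀ h1 (by positivity)]
  obtain ⟨s, rfl⟩ : ∃ s, t = s + 1 := ⟨t - 1, by ring⟩
  have hs : 0 ≤ s := by linarith
  rw [← sub_nonneg]
  ring_nf
  positivity

lemma aux_weak {t : ℝ} (ht : 0 < t) : auxR t ≤ deriv digamma t := by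
  have hn : ∀ n : ℕ, auxR t - auxR (t + n) ≤ deriv digamma t := by
    have key : ∀ n : ℕ, auxR t - auxR (t + n) ≤ deriv digamma t - deriv digamma (t + n) := by
      intro n
      induction n with
      | zero => simp
      | succ n ih =>
        have hp : 0 < t + n := by positivity
        have a := aux_rec' hp
        have b := aux_R hp
        push_cast
        rw [← add_assoc]
        linarith
    intro n
    have := aux_nonneg (t := t + n) (by positivity)
    linarith [key n]
  have hlim : Tendsto (fun n : ℕ => auxR t - 3 / (t + n)) atTop (nhds (auxR t - 0)) := by
    refine tendsto_const_nhds.sub (Tendsto.div_atTop tendsto_const_nhds ?_)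
    exact tendsto_atTop_add_const_left _ _ tendsto_natCast_atTop_atTop
  rw [sub_zero] at hlim
  refine le_of_tendsto hlim ?_
  filter_upwards [eventually_ge_atTop 1] with n hn1
  have h1 : (1 : ℝ) ≤ n := by exact_mod_cast hn1
  have := aux_bound (t := t + n) (by linarith)
  linarith [hn n]

/-- For all x > −1/2, ψ'(x + 1/2) > 20x(84x² + 71)/(1680x⁴ + 1560x² + 81). -/
theorem stmt_4 (x : ℝ) (hx : -(1 / 2) < x) :
    deriv digamma (x + 1 / 2) >
      20 * x * (84 * x ^ 2 + 71) / (1680 * x ^ 4 + 1560 * x ^ 2 + 81) := by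
  have ht : 0 < x + 1 / 2 := by linarith
  have a := aux_rec' ht
  have b := aux_R ht
  have c := aux_weak (t := x + 1 / 2 + 1) (by linarith)
  have d : auxR (x + 1 / 2) =
      20 * x * (84 * x ^ 2 + 71) / (1680 * x ^ 4 + 1560 * x ^ 2 + 81) := by
    unfold auxR
    simp only [add_sub_cancel_right]
  rw [← d]
  linarith
end

section
/- For all x > -1/2, one has ψ'''(x + 1/2) > (160/3)·x·(6585600x⁸ + 15052800x⁶ + 11696160x⁴ + 1820960x² − 701703)/(560x⁴ + 520x² + 27)³. -/
open Real Filter Set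

lemma dg_diff {y : ℝ} (hy : 0 < y) :
    DifferentiableAt ℝ (fun y : ℝ => Real.log (Real.Gamma y)) y := by
  refine ((differentiableAt_Gamma ?_).log (Gamma_ne_zero ?_)) <;>
    exact fun m ↦ ne_of_gt (by have := Nat.cast_nonneg (α := ℝ) m; linarith)

lemma dg_add_one {y : ℝ} (hy : 0 < y) : digamma (y + 1) = digamma y + 1 / y := by
  unfold digamma
  rw [← deriv_comp_add_const, one_div, ← Real.deriv_log,
    ← deriv_add (dg_diff hy) (differentiableAt_log hy.ne')]
  apply EventuallyEq.deriv_eq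
  filter_upwards [eventually_gt_nhds hy] with z hz
  simp only [Pi.add_apply, Gamma_add_one hz.ne', Real.log_mul hz.ne' (Gamma_pos_of_pos hz).ne', add_comm]

lemma dg_mono : MonotoneOn digamma (Ioi 0) := by
  have h : ConvexOn ℝ (Ioi 0) (fun y : ℝ => Real.log (Real.Gamma y)) := convexOn_log_Gamma
  exact h.monotoneOn_deriv (fun x hx => dg_diff hx)

lemma dg_add_nat {y : ℝ} (hy : 0 < y) (n : ℕ) :
    digamma (y + n) = digamma y + ∑ k ∈ Finset.range n, 1 / (y + k) := by
  induction n with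
  | zero => simp
  | succ n ih =>
    rw [Finset.sum_range_succ, Nat.cast_succ, ← add_assoc, dg_add_one (by positivity), ih]
    ring

lemma dg_tendsto {y : ℝ} (hy : 0 < y) :
    Tendsto (fun n : ℕ => digamma (y + n) - digamma (1 + n)) atTop (nhds 0) := by
  obtain ⟨m, hm⟩ := exists_nat_gt y
  have hlim : Tendsto (fun n : ℕ => (m : ℝ) / (n : ℝ)) atTop (nhds 0) :=
    tendsto_const_div_atTop_nhds_zero_nat _
  have hlim2 : Tendsto (fun n : ℕ => -(1 / (n : ℝ))) atTop (nhds 0) := by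
    simpa using (tendsto_const_div_atTop_nhds_zero_nat (1 : ℝ)).neg
  refine tendsto_of_tendsto_of_tendsto_of_le_of_le' hlim2 hlim ?_ ?_
  · filter_upwards [eventually_gt_atTop 0] with n hn
    have hn' : (0 : ℝ) < n := by exact_mod_cast hn
    have h1 := dg_mono (show (n : ℝ) ∈ Ioi 0 from hn')
      (show y + n ∈ Ioi (0 : ℝ) from by simp only [mem_Ioi]; positivity) (by linarith)
    have h2 := dg_add_one hn'
    rw [add_comm (n : ℝ) 1] at h2
    linarith
  · filter_upwards [eventually_gt_atTop 0] with n hn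
    have hn' : (0 : ℝ) < n := by exact_mod_cast hn
    have h1 := dg_mono (show y + n ∈ Ioi (0 : ℝ) from by simp only [mem_Ioi]; positivity)
      (show ((1 + n : ℝ) + m) ∈ Ioi (0 : ℝ) from by simp only [mem_Ioi]; positivity) (by linarith)
    rw [dg_add_nat (y := 1 + (n : ℝ)) (by positivity)] at h1
    have h3 : ∑ k ∈ Finset.range m, 1 / ((1 + n : ℝ) + k) ≤ ∑ k ∈ Finset.range m, 1 / (n : ℝ) := by
      refine Finset.sum_le_sum fun k _ => ?_
      apply one_div_le_one_div_of_le hn'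
      have : (0 : ℝ) ≤ k := Nat.cast_nonneg k
      linarith
    rw [Finset.sum_const, Finset.card_range, nsmul_eq_mul, mul_one_div] at h3
    linarith

lemma sm_pow {a : ℝ} (ha : 0 < a) (k : ℕ) (hk : 2 ≤ k) :
    Summable (fun n : ℕ => 1 / (a + n) ^ k) := by
  have h := (Real.summable_one_div_nat_pow (p := k)).2 (by omega)
  have h2 := (summable_nat_add_iff 1).2 h
  have h3 : Summable (fun n : ℕ => 1 / (a + ((n + 1 : ℕ) : ℝ)) ^ k) := by
    refine Summable.of_nonneg_of_le (fun n => by positivity) (fun n => ?_) h2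
    apply one_div_le_one_div_of_le (by positivity)
    gcongr
    linarith
  exact (summable_nat_add_iff (f := fun n : ℕ => 1 / (a + (n : ℝ)) ^ k) 1).1 h3

lemma hd_one (n : ℕ) {y : ℝ} (hy : 0 < y) (k : ℕ) :
    HasDerivAt (fun y : ℝ => 1 / (y + n) ^ k) (-(k : ℝ) * (1 / (y + n) ^ (k + 1))) y := by
  have hp : y + n ≠ 0 := by positivity
  have h := ((((hasDerivAt_id y).add_const (n : ℝ)).fun_pow k).fun_inv (pow_ne_zero k hp))
  simp only [one_div]
  convert! h using 1
  cases k with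
  | zero => simp
  | succ k => simp only [id, Nat.add_sub_cancel]; field_simp; ring

lemma hd_tsum {y : ℝ} (hy : 0 < y) (k : ℕ) (hk : 2 ≤ k) :
    HasDerivAt (fun y : ℝ => ∑' n : ℕ, 1 / (y + n) ^ k)
      (-(k : ℝ) * ∑' n : ℕ, 1 / (y + n) ^ (k + 1)) y := by
  rw [← tsum_mul_left]
  refine hasDerivAt_tsum_of_isPreconnected (t := Ioi (y / 2)) (y₀ := y)
    (g := fun (n : ℕ) (z : ℝ) => 1 / (z + n) ^ k)
    (g' := fun (n : ℕ) (z : ℝ) => -(k : ℝ) * (1 / (z + n) ^ (k + 1)))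
    (u := fun n : ℕ => (k : ℝ) * (1 / (y / 2 + n) ^ (k + 1)))
    ((sm_pow (by positivity) _ (by omega)).mul_left _) isOpen_Ioi isPreconnected_Ioi ?_ ?_ ?_
    (sm_pow hy k hk) ?_
  · intro n z hz
    have hz' : y / 2 < z := hz
    exact hd_one n (by linarith) k
  · intro n z hz
    have hz' : y / 2 < z := hz
    have : 0 < z := by linarith
    rw [norm_mul, norm_neg, Real.norm_of_nonneg (by positivity), Real.norm_of_nonneg (by positivity)]
    gcongr
  · simp only [mem_Ioi]; linarith
  · simp only [mem_Ioi]; linarith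

lemma dg_series {y : ℝ} (hy : 0 < y) :
    HasDerivAt (fun y : ℝ => ∑' n : ℕ, (1 / (1 + n : ℝ) - 1 / (y + n) ^ 1))
      (∑' n : ℕ, 1 / (y + n) ^ 2) y ∧
    Summable (fun n : ℕ => (1 / (1 + n : ℝ) - 1 / (y + n) ^ 1)) := by
  have h0 : Summable (fun n : ℕ => (1 / (1 + n : ℝ) - 1 / ((1 : ℝ) + n) ^ 1)) := by
    simp
  set a := min y 1 / 2 with ha
  have hm : 0 < min y 1 := lt_min hy one_pos
  have ha0 : 0 < a := by positivity
  have hay : a < y := by have := min_le_left y 1; linarith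
  have ha1 : a < 1 := by have := min_le_right y 1; linarith
  have hd : ∀ (n : ℕ) (z : ℝ), z ∈ Ioi a →
      HasDerivAt (fun y : ℝ => (1 / (1 + n : ℝ) - 1 / (y + n) ^ 1)) (1 / (z + n) ^ 2) z := by
    intro n z hz
    have := (hd_one n (lt_trans ha0 (mem_Ioi.1 hz)) 1).const_sub (1 / (1 + n : ℝ))
    simpa using this
  have hb : ∀ (n : ℕ) (z : ℝ), z ∈ Ioi a → ‖1 / (z + n) ^ 2‖ ≤ 1 / (a + n) ^ 2 := by
    intro n z hz
    have hz' : a < z := hz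
    have : 0 < z := by linarith
    rw [Real.norm_of_nonneg (by positivity)]
    gcongr
  exact ⟨hasDerivAt_tsum_of_isPreconnected (g := fun (n : ℕ) (z : ℝ) => 1 / (1 + n : ℝ) - 1 / (z + n) ^ 1)
    (g' := fun (n : ℕ) (z : ℝ) => 1 / (z + n) ^ 2) (y₀ := 1)
    (t := Ioi a) (sm_pow ha0 2 le_rfl) isOpen_Ioi isPreconnected_Ioi
    hd hb ha1 h0 hay, summable_of_summable_hasDerivAt_of_isPreconnected (g := fun (n : ℕ) (z : ℝ) => 1 / (1 + n : ℝ) - 1 / (z + n) ^ 1)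
    (g' := fun (n : ℕ) (z : ℝ) => 1 / (z + n) ^ 2) (y₀ := 1)
    (t := Ioi a) (sm_pow ha0 2 le_rfl)
    isOpen_Ioi isPreconnected_Ioi hd hb ha1 h0 hay⟩

lemma dg_eq {y : ℝ} (hy : 0 < y) :
    digamma y = digamma 1 + ∑' n : ℕ, (1 / (1 + n : ℝ) - 1 / (y + n) ^ 1) := by
  have h1 := (dg_series hy).2.hasSum.tendsto_sum_nat
  have h2 : Tendsto (fun n : ℕ => ∑ k ∈ Finset.range n, (1 / (1 + k : ℝ) - 1 / (y + k) ^ 1)) atTop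
      (nhds (digamma y - digamma 1)) := by
    have := (dg_tendsto hy).const_sub (digamma y - digamma 1)
    rw [sub_zero] at this
    refine this.congr fun n => ?_
    rw [dg_add_nat hy, dg_add_nat one_pos]
    simp only [Finset.sum_sub_distrib, pow_one]
    ring
  have := tendsto_nhds_unique h1 h2
  linarith

lemma dg_d1 {y : ℝ} (hy : 0 < y) : deriv digamma y = ∑' n : ℕ, 1 / (y + n) ^ 2 := by
  refine HasDerivAt.deriv ?_
  refine ((dg_series hy).1.const_add (digamma 1)).congr_of_eventuallyEq ?_
  filter_upwards [eventually_gt_nhds hy] with z hz using dg_eq hz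

lemma dg_d2 {y : ℝ} (hy : 0 < y) :
    deriv (deriv digamma) y = -(2 : ℝ) * ∑' n : ℕ, 1 / (y + n) ^ 3 := by
  refine HasDerivAt.deriv ?_
  refine (hd_tsum hy 2 le_rfl).congr_of_eventuallyEq ?_
  filter_upwards [eventually_gt_nhds hy] with z hz using dg_d1 hz

lemma dg_d3 {y : ℝ} (hy : 0 < y) :
    iteratedDeriv 3 digamma y = 6 * ∑' n : ℕ, 1 / (y + n) ^ 4 := by
  have : iteratedDeriv 3 digamma = deriv (deriv (deriv digamma)) := by
    simp [iteratedDeriv_succ, iteratedDeriv_zero]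
  rw [this]
  refine HasDerivAt.deriv ?_
  have h := ((hd_tsum hy 3 (by norm_num)).const_mul (-2 : ℝ))
  have h2 := h.congr_of_eventuallyEq (f₁ := deriv (deriv digamma))
    (by filter_upwards [eventually_gt_nhds hy] with z hz using dg_d2 hz)
  convert! h2 using 1
  push_cast
  ring

noncomputable def rr (x : ℝ) : ℝ :=
  (160 / 3) * x *
        (6585600 * x ^ 8 + 15052800 * x ^ 6 + 11696160 * x ^ 4 + 1820960 * x ^ 2 - 701703) /
        (560 * x ^ 4 + 520 * x ^ 2 + 27) ^ 3

lemma qpos (t : ℝ) (ht : 0 ≤ t) :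
    0 < 300578991243264 - 2880548666081280 * t + 16152255308759040 * t ^ 2
      - 61720451717529600 * t ^ 3 + 39960872327577600 * t ^ 4 + 207410278957056000 * t ^ 5
      + 569999873802240000 * t ^ 6 + 540700814868480000 * t ^ 7 + 398792746598400000 * t ^ 8 := by
  rcases le_total (1 / 4) t with h | h
  · obtain ⟨s, rfl⟩ : ∃ s, t = 1 / 4 + s := ⟨t - 1 / 4, by ring⟩
    have hs : 0 ≤ s := by linarith
    have : 0 < 162468960067584 + 4630146098135040 * s + 64468243057213440 * s ^ 2
      + 381729723383808000 * s ^ 3 + 1238339252492697600 * s ^ 4 + 2121023562448896000 * s ^ 5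
      + 2214113606369280000 * s ^ 6 + 1338286308065280000 * s ^ 7 + 398792746598400000 * s ^ 8 := by
      positivity
    linear_combination this
  · obtain ⟨s, rfl⟩ : ∃ s, t = s / 4 := ⟨4 * t, by ring⟩
    obtain ⟨r, hr⟩ : ∃ r, r = 1 - s := ⟨_, rfl⟩
    have hs : 0 ≤ s := by linarith
    have hr0 : 0 ≤ r := by linarith
    have : 0 < r ^ 8 + s ^ 8 := by
      rcases hs.eq_or_lt with h | h
      · subst h; norm_num at hr; subst hr; norm_num
      · positivity
    have : 0 < 162468960067584 * (r ^ 8 + s ^ 8) + 138110031175680 * r ^ 8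
      + 1684494763425792 * s * r ^ 7
      + 4384767545966592 * s ^ 2 * r ^ 6 + 6802256695394304 * s ^ 3 * r ^ 5
      + 6312654777876480 * s ^ 4 * r ^ 4 + 3001058967158784 * s ^ 5 * r ^ 3
      + 475640401231872 * s ^ 6 * r ^ 2 + 142215156006912 * s ^ 7 * r := by
      positivity
    subst hr
    linear_combination this

lemma rr_gap (x : ℝ) (hx : -(1 / 2) < x) : rr x - rr (x + 1) < 6 / (x + 1 / 2) ^ 4 := by
  obtain ⟨y, rfl⟩ : ∃ y, x = y - 1 / 2 := ⟨x + 1 / 2, by ring⟩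
  have hy : 0 < y := by linarith
  have h := qpos (y ^ 2) (by positivity)
  have d1 : (0 : ℝ) < 560 * (y - 1 / 2) ^ 4 + 520 * (y - 1 / 2) ^ 2 + 27 := by positivity
  have d2 : (0 : ℝ) < 560 * (y + 1 / 2) ^ 4 + 520 * (y + 1 / 2) ^ 2 + 27 := by positivity
  unfold rr
  rw [show y - 1 / 2 + 1 / 2 = y by ring, show y - 1 / 2 + 1 = y + 1 / 2 by ring,
    div_sub_div _ _ (by positivity) (by positivity), div_lt_div_iff₀ (by positivity) (by positivity)]
  linear_combination h

lemma rr_le (x : ℝ) (hx : 1 ≤ x) : rr x ≤ 100000 / x := by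
  have hx0 : 0 < x := by linarith
  unfold rr
  rw [div_le_div_iff₀ (by positivity) hx0]
  obtain ⟨s, rfl⟩ : ∃ s, x = 1 + s := ⟨x - 1, by ring⟩
  have hs : 0 ≤ s := by linarith
  rw [← sub_nonneg]
  ring_nf
  positivity

lemma main_ineq (x : ℝ) (hx : -(1 / 2) < x) :
    rr x < 6 * ∑' n : ℕ, 1 / (x + 1 / 2 + n) ^ 4 := by
  have hy : 0 < x + 1 / 2 := by linarith
  have hS := ((sm_pow hy 4 (by norm_num)).hasSum.mul_left 6).tendsto_sum_nat
  have hS1 := (tendsto_add_atTop_iff_nat 1).2 hS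
  have key : ∀ N : ℕ, rr x - rr (x + (N + 1)) + (6 / (x + 1 / 2) ^ 4 - (rr x - rr (x + 1))) ≤
      ∑ n ∈ Finset.range (N + 1), 6 * (1 / (x + 1 / 2 + n) ^ 4) := by
    intro N
    induction N with
    | zero => simp; apply le_of_eq; ring
    | succ N ih =>
      rw [Finset.sum_range_succ]
      have hN : (0 : ℝ) ≤ N := Nat.cast_nonneg N
      have := rr_gap (x + (N + 1)) (by linarith)
      push_cast at ih ⊢
      rw [show x + (N + 1) + 1 / 2 = x + 1 / 2 + ((N : ℝ) + 1) by ring, add_assoc x] at this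
      rw [mul_one_div]
      linarith
  have hlim : Tendsto (fun N : ℕ => 100000 / (x + ((N : ℝ) + 1))) atTop (nhds 0) := by
    apply Tendsto.const_div_atTop
    apply tendsto_atTop_add_const_left
    exact tendsto_atTop_add_const_right _ _ tendsto_natCast_atTop_atTop
  have h2 := (hlim.const_sub (rr x)).add_const (6 / (x + 1 / 2) ^ 4 - (rr x - rr (x + 1)))
  have h3 := le_of_tendsto_of_tendsto h2 hS1 (by
    filter_upwards [eventually_ge_atTop 1] with N hN
    have hN' : (1 : ℝ) ≤ N := by exact_mod_cast hN
    have := rr_le (x + (N + 1)) (by linarith)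
    have := key N
    linarith)
  have := rr_gap x hx
  linarith

/-- For all x > −1/2, ψ'''(x + 1/2) > (160/3)·x·(6585600x⁸ + 15052800x⁶ + 11696160x⁴ + 1820960x² − 701703)/(560x⁴ + 520x² + 27)³. -/
theorem stmt_6 (x : ℝ) (hx : -(1 / 2) < x) :
    iteratedDeriv 3 digamma (x + 1 / 2) >
      (160 / 3) * x *
        (6585600 * x ^ 8 + 15052800 * x ^ 6 + 11696160 * x ^ 4 + 1820960 * x ^ 2 - 701703) /
        (560 * x ^ 4 + 520 * x ^ 2 + 27) ^ 3 := by
  have hy : 0 < x + 1 / 2 := by linarith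
  rw [dg_d3 hy]
  exact main_ineq x hx
end

section
/- Let a > 1/15. The function F_a is strictly decreasing on (0, ∞) if and only if a ∈ (1/15, a₀'], where a₀' = (45 − 4π² + 3√(4π⁴ − 80π² + 405)) / (30(π² − 9)) ≈ 0.47053. -/
open Real Filter Set

/-! ### The trigamma series -/

noncomputable def tri (x : ℝ) : ℝ := ∑' n : ℕ, 1 / (x + n) ^ 2

lemma tri_summable {x : ℝ} (hx : 0 < x) : Summable (fun n : ℕ => 1 / (x + n) ^ 2) := by
  have h1 : Summable (fun n : ℕ => 1 / ((n : ℝ) + 1) ^ 2) := by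
    have := (summable_nat_add_iff 1).2 (Real.summable_one_div_nat_pow.2 (by norm_num : 1 < 2))
    simpa using this
  rw [← summable_nat_add_iff 1]
  refine Summable.of_nonneg_of_le (fun n => by positivity) (fun n => ?_) h1
  push_cast
  refine one_div_le_one_div_of_le (by positivity) (pow_le_pow_left₀ (by positivity) ?_ 2)
  linarith

lemma tri_succ {x : ℝ} (hx : 0 < x) : tri x = 1 / x ^ 2 + tri (x + 1) := by
  unfold tri
  rw [(tri_summable hx).tsum_eq_zero_add]
  congr 1
  · simp
  · refine tsum_congr fun n => ?_
    push_cast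
    congr 2
    ring

lemma tri_one : tri 1 = π ^ 2 / 6 := by
  have h := hasSum_zeta_two.tsum_eq
  rw [hasSum_zeta_two.summable.tsum_eq_zero_add] at h
  rw [← h]
  unfold tri
  simp only [Nat.cast_zero]
  norm_num
  refine tsum_congr fun n => ?_
  rw [add_comm]

/-! ### The digamma function -/

lemma dLG {x : ℝ} (hx : 0 < x) : DifferentiableAt ℝ (fun y : ℝ => Real.log (Real.Gamma y)) x := by
  refine DifferentiableAt.log (Real.differentiableAt_Gamma fun m => ?_) (Real.Gamma_pos_of_pos hx).ne'
  have : (0 : ℝ) ≤ m := Nat.cast_nonneg m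
  linarith

lemma logGamma_succ {x : ℝ} (hx : 0 < x) :
    Real.log (Real.Gamma (x + 1)) = Real.log x + Real.log (Real.Gamma x) := by
  rw [Real.Gamma_add_one hx.ne', Real.log_mul hx.ne' (Real.Gamma_pos_of_pos hx).ne']

lemma digamma_succ {x : ℝ} (hx : 0 < x) : digamma (x + 1) = digamma x + 1 / x := by
  have h1 : HasDerivAt (fun y : ℝ => Real.log (Real.Gamma (y + 1))) (digamma (x + 1)) x :=
    HasDerivAt.comp_add_const x 1 (dLG (by linarith : 0 < x + 1)).hasDerivAt
  have h2 : HasDerivAt (fun y : ℝ => Real.log y + Real.log (Real.Gamma y)) (x⁻¹ + digamma x) x :=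
    (Real.hasDerivAt_log hx.ne').add (dLG hx).hasDerivAt
  have h3 : (fun y : ℝ => Real.log (Real.Gamma (y + 1))) =ᶠ[nhds x]
      (fun y : ℝ => Real.log y + Real.log (Real.Gamma y)) := by
    filter_upwards [lt_mem_nhds hx] with y hy using logGamma_succ hy
  have := h1.unique (h2.congr_of_eventuallyEq h3)
  rw [this, one_div, add_comm]

lemma digamma_le {x : ℝ} (hx : 0 < x) : digamma x ≤ Real.log x := by
  have h := Real.convexOn_log_Gamma.deriv_le_slope (x := x) (y := x + 1) (mem_Ioi.2 hx)
    (mem_Ioi.2 (by linarith)) (by linarith) (dLG hx)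
  rw [slope_def_field] at h
  simp only [Function.comp_apply, logGamma_succ hx] at h
  have e : (Real.log x + Real.log (Real.Gamma x) - Real.log (Real.Gamma x)) / (x + 1 - x) = Real.log x := by
    have : x + 1 - x = 1 := by ring
    rw [this]; ring
  rw [e] at h
  exact h

lemma le_digamma {x : ℝ} (hx : 0 < x) : Real.log x ≤ digamma (x + 1) := by
  have h := Real.convexOn_log_Gamma.slope_le_deriv (x := x) (y := x + 1) (mem_Ioi.2 hx)
    (mem_Ioi.2 (by linarith)) (by linarith) (dLG (by linarith))
  rw [slope_def_field] at h
  simp only [Function.comp_apply, logGamma_succ hx] at h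
  have e : (Real.log x + Real.log (Real.Gamma x) - Real.log (Real.Gamma x)) / (x + 1 - x) = Real.log x := by
    have : x + 1 - x = 1 := by ring
    rw [this]; ring
  rw [e] at h
  exact h

lemma digamma_add_nat {x : ℝ} (hx : 0 < x) (n : ℕ) :
    digamma (x + n) = digamma x + ∑ i ∈ Finset.range n, 1 / (x + i) := by
  induction n with
  | zero => simp
  | succ k ih =>
    rw [Finset.sum_range_succ, ← add_assoc, ← ih]
    push_cast
    rw [← add_assoc, digamma_succ (by positivity)]

lemma log_diff_tendsto (u v : ℝ) :
    Tendsto (fun n : ℕ => Real.log (u + n) - Real.log (v + n)) atTop (nhds 0) := by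
  have key : ∀ w : ℝ, Tendsto (fun n : ℕ => Real.log (w + n) - Real.log n) atTop (nhds 0) := by
    intro w
    have h1 : Tendsto (fun n : ℕ => w / (n : ℝ) + 1) atTop (nhds 1) := by
      simpa using (tendsto_const_div_atTop_nhds_zero_nat w).add_const 1
    have h2 := h1.log one_ne_zero
    rw [Real.log_one] at h2
    refine h2.congr' ?_
    have hw : ∀ᶠ n : ℕ in atTop, -w < n :=
      tendsto_natCast_atTop_atTop.eventually_gt_atTop (-w)
    filter_upwards [hw, eventually_gt_atTop 0] with n hn h0
    have h0' : (0 : ℝ) < n := Nat.cast_pos.2 h0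
    rw [← Real.log_div (by linarith) h0'.ne']
    congr 1
    field_simp
  simpa using (key u).sub (key v)

lemma digamma_diff_tendsto {x : ℝ} (hx : 0 < x) :
    Tendsto (fun n : ℕ => digamma (1 + n) - digamma (x + n)) atTop (nhds 0) := by
  refine tendsto_of_tendsto_of_tendsto_of_le_of_le' (log_diff_tendsto 0 x)
    (log_diff_tendsto 1 (x - 1)) ?_ ?_
  · filter_upwards [eventually_gt_atTop 0] with n h0
    have h0' : (0 : ℝ) < n := Nat.cast_pos.2 h0
    have h1 := le_digamma h0'
    have h2 := digamma_le (x := x + n) (by positivity)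
    rw [add_comm (1 : ℝ), zero_add]
    linarith
  · filter_upwards [eventually_gt_atTop 0] with n h0
    have h0' : (1 : ℝ) ≤ n := by exact_mod_cast h0
    have h1 := digamma_le (x := 1 + n) (by positivity)
    have h2 := le_digamma (x := x - 1 + n) (by linarith)
    rw [show x - 1 + (n : ℝ) + 1 = x + n by ring] at h2
    linarith

lemma hasDerivAt_digamma {x : ℝ} (hx : 0 < x) : HasDerivAt digamma (tri x) x := by
  obtain ⟨ε, hε, hε1, hεx⟩ : ∃ ε : ℝ, 0 < ε ∧ ε < 1 ∧ ε < x := by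
    obtain ⟨ε, h1, h2⟩ := exists_between (lt_min one_pos hx)
    exact ⟨ε, h1, h2.trans_le (min_le_left _ _), h2.trans_le (min_le_right _ _)⟩
  let g : ℕ → ℝ → ℝ := fun n y => 1 / (1 + n) - 1 / (y + n)
  let g' : ℕ → ℝ → ℝ := fun n y => 1 / (y + n) ^ 2
  have hg : ∀ n y, y ∈ Ioi ε → HasDerivAt (g n) (g' n y) y := by
    intro n y hy
    have hy : ε < y := hy
    have hn : (0 : ℝ) ≤ n := Nat.cast_nonneg n
    have hne : y + n ≠ 0 := (by linarith : 0 < y + n).ne'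
    have h := (((hasDerivAt_id y).add_const (n : ℝ)).inv hne).const_sub (1 / (1 + (n : ℝ)))
    simp only [g, g']
    convert! h using 1
    · ext z; simp
    · simp
      ring
  have hg' : ∀ n y, y ∈ Ioi ε → ‖g' n y‖ ≤ 1 / (ε + n) ^ 2 := by
    intro n y hy
    have hy : ε < y := hy
    simp only [g']
    rw [Real.norm_of_nonneg (by positivity)]
    gcongr
  have hg0 : Summable fun n => g n 1 := by
    simp only [g, sub_self]
    exact summable_zero
  have hs : ∀ y, y ∈ Ioi ε → Summable fun n => g n y := fun y hy =>
    summable_of_summable_hasDerivAt_of_isPreconnected (tri_summable hε) isOpen_Ioi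
      isPreconnected_Ioi hg hg' (mem_Ioi.2 hε1) hg0 hy
  have hd : HasDerivAt (fun z => ∑' n, g n z) (∑' n, g' n x) x :=
    hasDerivAt_tsum_of_isPreconnected (tri_summable hε) isOpen_Ioi
      isPreconnected_Ioi hg hg' (mem_Ioi.2 hε1) hg0 (mem_Ioi.2 hεx)
  have heq : ∀ y, y ∈ Ioi ε → digamma y = digamma 1 + ∑' n, g n y := by
    intro y hy
    have hy0 : 0 < y := hε.trans hy
    have h1 := (hs y hy).hasSum.tendsto_sum_nat
    have h2 : Tendsto (fun n : ℕ => ∑ i ∈ Finset.range n, g i y) atTop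
        (nhds (digamma y - digamma 1)) := by
      have h3 := (digamma_diff_tendsto hy0).add_const (digamma y - digamma 1)
      rw [zero_add] at h3
      refine h3.congr fun n => ?_
      simp only [g, Finset.sum_sub_distrib]
      rw [digamma_add_nat one_pos, digamma_add_nat hy0]
      ring
    have := tendsto_nhds_unique h1 h2
    linarith
  refine (hd.const_add (digamma 1)).congr_of_eventuallyEq ?_
  filter_upwards [lt_mem_nhds hεx] with y hy using heq y hy

/-! ### The rational comparison function -/

noncomputable def hh (c x : ℝ) : ℝ :=
  (x + 1 / 2) * (x ^ 2 + x + 1 / 3 + c) /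
    ((x ^ 2 + x + 1 / 3) ^ 2 + c * (x ^ 2 + x + 1 / 3) - 1 / 45)

lemma hh_den_pos {c x : ℝ} (hc : -4 / 15 < c) (hx : 0 ≤ x) :
    0 < (x ^ 2 + x + 1 / 3) ^ 2 + c * (x ^ 2 + x + 1 / 3) - 1 / 45 := by
  have hu : 0 ≤ x ^ 2 + x := by positivity
  nlinarith [mul_nonneg hu hu, mul_nonneg hu (by linarith : 0 ≤ c + 4 / 15)]

lemma hh_anti {c c' x : ℝ} (hc : -4 / 15 < c) (hcc : c < c') (hx : 0 ≤ x) : hh c' x < hh c x := by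
  unfold hh
  rw [div_lt_div_iff₀ (hh_den_pos (hc.trans hcc) hx) (hh_den_pos hc hx)]
  have : 0 < (x + 1 / 2) * (c' - c) := mul_pos (by linarith) (by linarith)
  nlinarith

lemma hh_tendsto {x : ℝ} (hx : 0 ≤ x) :
    Tendsto (fun n : ℕ => hh (11 / 25) (x + n)) atTop (nhds 0) := by
  have h1 : Tendsto (fun n : ℕ => 2 / (n : ℝ)) atTop (nhds 0) :=
    tendsto_const_div_atTop_nhds_zero_nat 2
  refine squeeze_zero' ?_ ?_ h1
  · filter_upwards with n
    have hy : 0 ≤ x + n := by positivity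
    have := hh_den_pos (c := 11 / 25) (by norm_num) hy
    unfold hh
    positivity
  · filter_upwards [eventually_gt_atTop 0] with n h0
    have h0' : (1 : ℝ) ≤ n := by exact_mod_cast h0
    have hy : 0 ≤ x + n := by positivity
    have hd := hh_den_pos (c := 11 / 25) (by norm_num) hy
    unfold hh
    have h2 : (2 : ℝ) / (x + n) ≤ 2 / n := by
      gcongr
      linarith
    refine le_trans ?_ h2
    obtain ⟨y, hyy, hy1⟩ : ∃ y : ℝ, x + n = y ∧ 1 ≤ y := ⟨_, rfl, by linarith⟩
    rw [hyy] at hd ⊢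
    rw [div_le_div_iff₀ hd (by linarith)]
    obtain ⟨z, rfl⟩ : ∃ z, y = 1 + z := ⟨y - 1, by ring⟩
    have hz : 0 ≤ z := by linarith
    rw [← sub_nonneg]
    ring_nf
    positivity

lemma hh_step {x : ℝ} (hx : 1 / 10 ≤ x) :
    1 / (x + 1) ^ 2 ≤ hh (11 / 25) x - hh (11 / 25) (x + 1) := by
  have h1 := hh_den_pos (c := 11 / 25) (x := x) (by norm_num) (by linarith)
  have h2 := hh_den_pos (c := 11 / 25) (x := x + 1) (by norm_num) (by linarith)
  unfold hh
  have h3 : 0 < x + 1 := by linarith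
  rw [div_sub_div _ _ h1.ne' h2.ne', div_le_div_iff₀ (by positivity) (by positivity)]
  obtain ⟨z, rfl⟩ : ∃ z, x = 1 / 10 + z := ⟨x - 1 / 10, by ring⟩
  have hz : 0 ≤ z := by linarith
  rw [← sub_nonneg]
  ring_nf
  positivity

lemma telescoping {f h : ℕ → ℝ} {s l : ℝ} (hf : HasSum f s) (hh : Tendsto h atTop (nhds l))
    (H : ∀ n, f n ≤ h n - h (n + 1)) : s ≤ h 0 - l := by
  refine le_of_tendsto_of_tendsto' hf.tendsto_sum_nat (hh.const_sub (h 0)) fun n => ?_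
  induction n with
  | zero => simp
  | succ k ih =>
    rw [Finset.sum_range_succ]
    have := H k
    linarith

lemma tri_le_hh {x : ℝ} (hx : 1 / 10 ≤ x) : tri (x + 1) ≤ hh (11 / 25) x := by
  have := telescoping (tri_summable (by linarith : 0 < x + 1)).hasSum
    (hh_tendsto (by linarith : 0 ≤ x)) (fun n => by
      have hn : (0 : ℝ) ≤ n := Nat.cast_nonneg n
      have := hh_step (x := x + n) (by linarith)
      push_cast
      rw [show x + 1 + (n : ℝ) = x + n + 1 by ring, ← add_assoc]
      exact this)
  simpa [tri] using this

noncomputable def KK (s : ℝ) : ℝ := 1 / s - 1 / (12 * s ^ 3)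

lemma KK_tendsto (u : ℝ) : Tendsto (fun n : ℕ => KK (u + n)) atTop (nhds 0) := by
  have h0 : Tendsto (fun n : ℕ => u + (n : ℝ)) atTop atTop :=
    tendsto_atTop_add_const_left _ _ tendsto_natCast_atTop_atTop
  have h1 : Tendsto (fun n : ℕ => (u + (n : ℝ))⁻¹) atTop (nhds 0) := tendsto_inv_atTop_zero.comp h0
  have h2 := h1.sub ((h1.pow 3).const_mul (1 / 12))
  norm_num at h2
  refine h2.congr fun n => ?_
  unfold KK
  rw [one_div (12 * (u + (n : ℝ)) ^ 3), mul_inv]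
  norm_num

lemma KK_rem {y : ℝ} (hy : 1 ≤ y) : 1 / y ^ 2 - (KK (y - 1 / 2) - KK (y + 1 / 2)) =
    7 / (48 * (y ^ 2 - 1 / 4) ^ 2 * y ^ 2) + 1 / (48 * (y ^ 2 - 1 / 4) ^ 3 * y ^ 2) := by
  have h1 : 0 < y - 1 / 2 := by linarith
  have h2 : 0 < y + 1 / 2 := by linarith
  have e : y ^ 2 - 1 / 4 = (y - 1 / 2) * (y + 1 / 2) := by ring
  have h3 : y ≠ 0 := by linarith
  rw [e]
  unfold KK
  obtain ⟨p, hp⟩ : ∃ p, y - 1 / 2 = p := ⟨_, rfl⟩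
  have : y = p + 1 / 2 := by linarith
  subst this
  rw [show p + 1 / 2 - 1 / 2 = p by ring, show p + 1 / 2 + 1 / 2 = p + 1 by ring] at *
  have := h1.ne'
  have := h2.ne'
  have h4 : 2 * p + 1 ≠ 0 := by intro h; apply h3; linarith
  field_simp
  ring

lemma KK_step {x y : ℝ} (hx : 0 ≤ x) (hy : 1 ≤ y) :
    1 / (x + y) ^ 2 - 1 / y ^ 2 ≤
      (KK (x + y - 1 / 2) - KK (y - 1 / 2)) - (KK (x + y + 1 / 2) - KK (y + 1 / 2)) := by
  have h1 := KK_rem hy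
  have h2 := KK_rem (y := x + y) (by linarith)
  have hp : 0 < y ^ 2 - 1 / 4 := by nlinarith
  have hle : y ^ 2 ≤ (x + y) ^ 2 := by gcongr; linarith
  have h3 : 7 / (48 * ((x + y) ^ 2 - 1 / 4) ^ 2 * (x + y) ^ 2) ≤ 7 / (48 * (y ^ 2 - 1 / 4) ^ 2 * y ^ 2) := by
    gcongr
  have h4 : 1 / (48 * ((x + y) ^ 2 - 1 / 4) ^ 3 * (x + y) ^ 2) ≤ 1 / (48 * (y ^ 2 - 1 / 4) ^ 3 * y ^ 2) := by
    have hp' : 0 < (x + y) ^ 2 - 1 / 4 := by linarith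
    gcongr
  linarith

lemma tri_diff_le {x : ℝ} (hx : 0 ≤ x) :
    tri (x + 2) - tri 2 ≤ KK (x + 3 / 2) - KK (3 / 2) := by
  have hs := (tri_summable (by linarith : 0 < x + 2)).hasSum.sub
    (tri_summable (by norm_num : (0 : ℝ) < 2)).hasSum
  have := telescoping hs ((KK_tendsto (x + 3 / 2)).sub (KK_tendsto (3 / 2))) (fun n => by
      have hn : (0 : ℝ) ≤ n := Nat.cast_nonneg n
      have := KK_step hx (by linarith : (1 : ℝ) ≤ 2 + n)
      push_cast
      convert! this using 3 <;> ring_nf)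
  simpa [tri] using this

lemma poly_pos {x e : ℝ} (hx : 0 < x) (hx1 : x ≤ 1 / 10) (he : 0 ≤ e) :
    0 < (19949/162000)+(-78971/486000)*x^1+(-11859083/21870000)*x^2+(-19036831/21870000)*x^3+(-10814629/10935000)*x^4+(-6283/9000)*x^5+(-582611/1822500)*x^6+(-1037/12150)*x^7+(-61/6075)*x^8
    + e * ((403/108)+(6091/405)*x^1+(2544919/72900)*x^2+(3898223/72900)*x^3+(1015096/18225)*x^4+(63841/1620)*x^5+(219551/12150)*x^6+(391/81)*x^7+(46/81)*x^8)
    + e ^ 2 * ((145/36)+(1475/108)*x^1+(22333/972)*x^2+(22241/972)*x^3+(6509/486)*x^4+(115/27)*x^5+(46/81)*x^6) := by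
  have hp : ∀ k : ℕ, x ^ k ≤ (1 / 10) ^ k := fun k => by gcongr
  have h1 := hp 1
  have h2 := hp 2
  have h3 := hp 3
  have h4 := hp 4
  have h5 := hp 5
  have h6 := hp 6
  have h7 := hp 7
  have h8 := hp 8
  refine add_pos_of_pos_of_nonneg (add_pos_of_pos_of_nonneg ?_ (by positivity)) (by positivity)
  norm_num at h1 h2 h3 h4 h5 h6 h7 h8 ⊢
  linarith

lemma hh_diff {x c : ℝ} (hx : 0 < x) (hx1 : x ≤ 1 / 10) (hc : 21 / 50 ≤ c) :
    1 / (x + 1) ^ 2 - 1 + (KK (x + 3 / 2) - KK (3 / 2)) < hh c x - hh c 0 := by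
  obtain ⟨e, rfl⟩ : ∃ e, c = 21 / 50 + e := ⟨c - 21 / 50, by ring⟩
  have he : 0 ≤ e := by linarith
  have d1 := hh_den_pos (c := 21 / 50 + e) (x := x) (by linarith) hx.le
  have d0 := hh_den_pos (c := 21 / 50 + e) (x := 0) (by linarith) le_rfl
  have hpoly := mul_pos hx (poly_pos hx hx1 he)
  have hD : 0 < 12 * (x + 1) ^ 2 * (x + 3 / 2) ^ 3 := by positivity
  have e1 : 1 / (x + 1) ^ 2 - 1 + (KK (x + 3 / 2) - KK (3 / 2)) =
      (12 * (x + 3 / 2) ^ 3 - 12 * (x + 3 / 2) ^ 3 * (x + 1) ^ 2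
        + (x + 1) ^ 2 * (12 * (x + 3 / 2) ^ 2 - 1)
        - (2 / 3 - 2 / 81) * (12 * (x + 1) ^ 2 * (x + 3 / 2) ^ 3))
        / (12 * (x + 1) ^ 2 * (x + 3 / 2) ^ 3) := by
    unfold KK
    have a1 : x + 1 ≠ 0 := by positivity
    obtain ⟨s, hs⟩ : ∃ s, x + 3 / 2 = s := ⟨_, rfl⟩
    have a2 : s ≠ 0 := by rw [← hs]; positivity
    rw [hs]
    field_simp
    ring
  rw [e1]
  unfold hh
  rw [div_sub_div _ _ d1.ne' d0.ne', div_lt_div_iff₀ hD (mul_pos d1 d0), ← sub_pos]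
  refine lt_of_lt_of_eq hpoly ?_
  ring

lemma hh_zero {c : ℝ} (hc : -4 / 15 < c) : hh c 0 = (15 + 45 * c) / (8 + 30 * c) := by
  have d0 := hh_den_pos (c := c) (x := 0) hc le_rfl
  unfold hh
  rw [div_eq_div_iff d0.ne' (by linarith)]
  ring

/-- The main inequality. -/
lemma main_ineq_s8 {c x : ℝ} (hc : -4 / 15 < c) (hx : 0 < x) (h0 : π ^ 2 / 6 ≤ hh c 0) :
    tri (x + 1) < hh c x := by
  have p1 := Real.pi_gt_d4
  have p2 := Real.pi_lt_d4
  have P1 : 9.869 < π ^ 2 := by nlinarith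
  have P2 : π ^ 2 < 9.87 := by nlinarith
  -- the critical value
  obtain ⟨c0, hc0⟩ : ∃ c0, c0 = (45 - 4 * π ^ 2) / (15 * (π ^ 2 - 9)) := ⟨_, rfl⟩
  have hq : 0 < 15 * (π ^ 2 - 9) := by linarith
  have hc01 : 21 / 50 ≤ c0 := by
    rw [hc0, le_div_iff₀ hq]; linarith
  have hc02 : c0 < 11 / 25 := by
    rw [hc0, div_lt_iff₀ hq]; linarith
  have hmul : c0 * (15 * (π ^ 2 - 9)) = 45 - 4 * π ^ 2 := by
    rw [hc0, div_mul_cancel₀ _ hq.ne']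
  have hc0v : hh c0 0 = π ^ 2 / 6 := by
    rw [hh_zero (by linarith), div_eq_div_iff (by linarith) (by norm_num)]
    linarith
  have hcc : c ≤ c0 := by
    by_contra hlt
    push Not at hlt
    have := hh_anti (x := 0) (by linarith : -4 / 15 < c0) hlt le_rfl
    linarith
  have hfin : tri (x + 1) < hh c0 x := by
    rcases le_total (1 / 10) x with h | h
    · exact (tri_le_hh h).trans_lt (hh_anti (by linarith) hc02 hx.le)
    · have h1 := hh_diff hx h hc01
      have h2 := tri_diff_le hx.le
      have h3 := tri_succ (by linarith : 0 < x + 1)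
      have h4 := tri_succ one_pos
      rw [tri_one] at h4
      rw [show x + 1 + 1 = x + 2 by ring] at h3
      rw [show (1 : ℝ) + 1 = 2 by norm_num] at h4
      norm_num at h4
      linarith
  rcases hcc.eq_or_lt with h | h
  · rw [h]; exact hfin
  · exact hfin.trans (hh_anti hc h hx.le)

lemma cc_gt {a : ℝ} (ha : 1 / 15 < a) : -4 / 15 < a - 1 / (45 * a) := by
  have : 1 / (45 * a) < 1 / 3 := by
    rw [div_lt_div_iff₀ (by linarith) (by norm_num)]; linarith
  linarith

lemma hasDerivAt_F {a x : ℝ} (ha : 1 / 15 < a) (hx : 0 ≤ x) :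
    HasDerivAt (fun x : ℝ => digamma (x + 1) - L x a) (tri (x + 1) - hh (a - 1 / (45 * a)) x) x := by
  have a0 : 0 < a := by linarith
  have h1 : HasDerivAt (fun y : ℝ => digamma (y + 1)) (tri (x + 1)) x :=
    HasDerivAt.comp_add_const x 1 (hasDerivAt_digamma (by linarith : 0 < x + 1))
  refine h1.sub ?_
  have q1 : 0 < x ^ 2 + x + (3 * a + 1) / 3 := by positivity
  have q2 : 0 < x ^ 2 + x + (15 * a - 1) / (45 * a) := by
    have : 0 < 15 * a - 1 := by linarith
    positivity
  have b : HasDerivAt (fun y : ℝ => y ^ 2 + y) (2 * x + 1) x := by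
    have := (hasDerivAt_pow 2 x).add (hasDerivAt_id x)
    convert! this using 1
    simp
  have l1 := ((b.add_const ((3 * a + 1) / 3)).log q1.ne').const_mul (1 / (90 * a ^ 2 + 2))
  have l2 := ((b.add_const ((15 * a - 1) / (45 * a))).log q2.ne').const_mul
    (45 * a ^ 2 / (90 * a ^ 2 + 2))
  have l := l1.add l2
  unfold L
  convert! l using 1
  have d := hh_den_pos (cc_gt ha) hx
  have e : (x ^ 2 + x + 1 / 3) ^ 2 + (a - 1 / (45 * a)) * (x ^ 2 + x + 1 / 3) - 1 / 45 =
    (x ^ 2 + x + (3 * a + 1) / 3) * (x ^ 2 + x + (15 * a - 1) / (45 * a)) := by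
    field_simp
    ring
  unfold hh
  rw [e]
  have e2 : x ^ 2 + x + 1 / 3 + (a - 1 / (45 * a)) =
      (x ^ 2 + x + (3 * a + 1) / 3) + (x ^ 2 + x + (15 * a - 1) / (45 * a)) - (x ^ 2 + x + 1 / 3) := by
    field_simp
    ring
  have e3 : (90 * a ^ 2 + 2) * (x ^ 2 + x + 1 / 3) =
    2 * (x ^ 2 + x + (3 * a + 1) / 3) + 90 * a ^ 2 * (x ^ 2 + x + (15 * a - 1) / (45 * a)) := by
    field_simp
    ring
  rw [e2]
  generalize x ^ 2 + x + (3 * a + 1) / 3 = U at *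
  generalize x ^ 2 + x + (15 * a - 1) / (45 * a) = V at *
  have hw : 0 < 90 * a ^ 2 + 2 := by positivity
  have e4 : x ^ 2 + x + 1 / 3 = (2 * U + 90 * a ^ 2 * V) / (90 * a ^ 2 + 2) := by
    rw [eq_div_iff hw.ne']; linarith
  rw [e4]
  field_simp
  ring

lemma cond_iff {a : ℝ} (ha : 1 / 15 < a) :
    a ≤ (45 - 4 * π ^ 2 + 3 * Real.sqrt (4 * π ^ 4 - 80 * π ^ 2 + 405)) / (30 * (π ^ 2 - 9)) ↔
      π ^ 2 / 6 ≤ hh (a - 1 / (45 * a)) 0 := by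
  have p1 := Real.pi_gt_d4
  have p2 := Real.pi_lt_d4
  have P1 : 9.869 < π ^ 2 := by nlinarith
  have P2 : π ^ 2 < 9.87 := by nlinarith
  have hc := cc_gt ha
  have a0 : 0 < a := by linarith
  rw [hh_zero hc, show π ^ 4 = (π ^ 2) ^ 2 by ring]
  generalize π ^ 2 = P at *
  have e : (15 + 45 * (a - 1 / (45 * a))) / (8 + 30 * (a - 1 / (45 * a))) =
      (15 * a + 45 * a ^ 2 - 1) / (8 * a + 30 * a ^ 2 - 2 / 3) := by
    rw [div_eq_div_iff (by linarith) (by nlinarith)]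
    field_simp
    ring
  rw [e, le_div_iff₀ (by linarith), div_le_div_iff₀ (by norm_num) (by nlinarith)]
  have hS : 0 ≤ 4 * P ^ 2 - 80 * P + 405 := by nlinarith
  have hs := Real.sq_sqrt hS
  have hs0 := Real.sqrt_nonneg (4 * P ^ 2 - 80 * P + 405)
  generalize Real.sqrt (4 * P ^ 2 - 80 * P + 405) = s at *
  have hid : (a * (30 * (P - 9)) - (45 - 4 * P)) ^ 2 - (3 * s) ^ 2 =
      (20 * (P - 9)) * ((P * (8 * a + 30 * a ^ 2 - 2 / 3) - (15 * a + 45 * a ^ 2 - 1) * 6) * (3 / 2)) := by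
    rw [mul_pow, hs]; ring
  have hq : 0 < 20 * (P - 9) := by linarith
  constructor
  · intro h
    by_contra hlt
    push Not at hlt
    have hpos := mul_pos hq (mul_pos (sub_pos.2 hlt) (by norm_num : (0 : ℝ) < 3 / 2))
    rw [← hid] at hpos
    have hlow : -(45 - 4 * P) ≤ a * (30 * (P - 9)) - (45 - 4 * P) := by nlinarith
    have hbig : (45 - 4 * P) ≤ 3 * s := by
      refine le_of_abs_le (abs_le_of_sq_le_sq ?_ (by linarith))
      nlinarith
    nlinarith [sq_le_sq' (a := a * (30 * (P - 9)) - (45 - 4 * P)) (b := 3 * s) (by linarith) (by linarith)]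
  · intro h
    have hneg := mul_nonneg hq.le (mul_nonneg (sub_nonneg.2 h) (by norm_num : (0 : ℝ) ≤ 3 / 2))
    have : (a * (30 * (P - 9)) - (45 - 4 * P)) ^ 2 ≤ (3 * s) ^ 2 := by linarith
    have := abs_le_of_sq_le_sq this (by linarith)
    linarith [le_abs_self (a * (30 * (P - 9)) - (45 - 4 * P))]

/-- For a > 1/15, F_a(x) = ψ(x+1) − L(x,a) is strictly decreasing on (0,∞) iff
a ∈ (1/15, a₀'], where a₀' = (45 − 4π² + 3√(4π⁴ − 80π² + 405))/(30(π² − 9)). -/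
theorem stmt_8 (a : ℝ) (ha : 1 / 15 < a) :
    StrictAntiOn (fun x : ℝ => digamma (x + 1) - L x a) (Set.Ioi 0) ↔
      a ∈ Set.Ioc (1 / 15 : ℝ)
        ((45 - 4 * π ^ 2 + 3 * Real.sqrt (4 * π ^ 4 - 80 * π ^ 2 + 405)) /
          (30 * (π ^ 2 - 9))) := by
  rw [mem_Ioc, cond_iff ha]
  constructor
  · intro H
    refine ⟨ha, ?_⟩
    by_contra hlt
    push Not at hlt
    have hd := hasDerivAt_F ha le_rfl
    rw [zero_add, tri_one] at hd
    set F : ℝ → ℝ := fun x : ℝ => digamma (x + 1) - L x a with hF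
    -- F x ≤ F 0 for x > 0, by continuity
    have hle : ∀ x, 0 < x → F x ≤ F 0 := by
      intro x hx
      have ht : Tendsto F (nhdsWithin 0 (Ioi 0)) (nhds (F 0)) :=
        hd.continuousAt.tendsto.mono_left nhdsWithin_le_nhds
      refine ge_of_tendsto ht ?_
      filter_upwards [self_mem_nhdsWithin, mem_nhdsWithin_of_mem_nhds (gt_mem_nhds hx)] with y hy hyx
      exact (H hy (mem_Ioi.2 hx) hyx).le
    have ht := hd.hasDerivWithinAt (s := Ioi 0)
    rw [hasDerivWithinAt_iff_tendsto_slope' (by simp)] at ht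
    have : π ^ 2 / 6 - hh (a - 1 / (45 * a)) 0 ≤ 0 := by
      refine le_of_tendsto ht ?_
      filter_upwards [self_mem_nhdsWithin] with y hy
      have hy : 0 < y := hy
      rw [slope_def_field]
      exact div_nonpos_of_nonpos_of_nonneg (by linarith [hle y hy]) (by linarith)
    linarith
  · rintro ⟨-, h⟩
    refine strictAntiOn_of_deriv_neg (convex_Ioi 0) ?_ ?_
    · intro x hx
      exact (hasDerivAt_F ha (le_of_lt hx)).continuousAt.continuousWithinAt
    · intro x hx
      rw [interior_Ioi] at hx
      rw [(hasDerivAt_F ha (le_of_lt hx)).deriv]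
      have := main_ineq_s8 (cc_gt ha) hx h
      linarith
end
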